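/- Let C be a model category whose underlying category is preadditive, has a zero object, and has countable products. Let (A_n)_{n ∈ ℕ} be objects of C together with morphisms f_n : A_{n+1} ⟶ A_n each of which is a fibration, and suppose A_0 is fibrant. Then the morphism id − shift : ∏_n A_n ⟶ ∏_n A_n, whose n-th component is π_n − f_n ∘ π_{n+1} (where π_n denotes the n-th projection), is a fibration. -/

import Mathlib

open CategoryTheory CategoryTheory.Limits

universe v u

/-- `f` is a retract of `g` in the arrow category. -/
def IsRetractOf {C : Type u} [Category.{v} C] {X Y X' Y' : C}
    (f : X ⟶ Y) (g : X' ⟶ Y') : Prop :=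
  ∃ (iX : X ⟶ X') (rX : X' ⟶ X) (iY : Y ⟶ Y') (rY : Y' ⟶ Y),
    iX ≫ rX = 𝟙 X ∧ iY ≫ rY = 𝟙 Y ∧ iX ≫ g = f ≫ iY ∧ g ≫ rY = rX ≫ f

/-- A (Quillen closed) model structure on a finitely bicomplete category `C`: classes of
weak equivalences, fibrations and cofibrations satisfying the two-out-of-three axiom,
closure under retracts, the lifting axioms and the factorization axioms. -/
structure ModelStructure (C : Type u) [Category.{v} C]
    [HasFiniteLimits C] [HasFiniteColimits C] where
  /-- weak equivalences -/
  W : MorphismProperty C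
  /-- fibrations -/
  Fib : MorphismProperty C
  /-- cofibrations -/
  Cof : MorphismProperty C
  W_comp : ∀ {X Y Z : C} (f : X ⟶ Y) (g : Y ⟶ Z), W f → W g → W (f ≫ g)
  W_cancel_left : ∀ {X Y Z : C} (f : X ⟶ Y) (g : Y ⟶ Z), W f → W (f ≫ g) → W g
  W_cancel_right : ∀ {X Y Z : C} (f : X ⟶ Y) (g : Y ⟶ Z), W g → W (f ≫ g) → W f
  W_retract : ∀ {X Y X' Y' : C} (f : X ⟶ Y) (g : X' ⟶ Y'), IsRetractOf f g → W g → W f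
  Fib_retract : ∀ {X Y X' Y' : C} (f : X ⟶ Y) (g : X' ⟶ Y'), IsRetractOf f g → Fib g → Fib f
  Cof_retract : ∀ {X Y X' Y' : C} (f : X ⟶ Y) (g : X' ⟶ Y'), IsRetractOf f g → Cof g → Cof f
  lift_cof_trivFib : ∀ {A B X Y : C} (i : A ⟶ B) (p : X ⟶ Y),
    Cof i → Fib p → W p → HasLiftingProperty i p
  lift_trivCof_fib : ∀ {A B X Y : C} (i : A ⟶ B) (p : X ⟶ Y),
    Cof i → W i → Fib p → HasLiftingProperty i p
  factor_cof_trivFib : ∀ {X Y : C} (f : X ⟶ Y),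
    ∃ (Z : C) (i : X ⟶ Z) (p : Z ⟶ Y), Cof i ∧ Fib p ∧ W p ∧ i ≫ p = f
  factor_trivCof_fib : ∀ {X Y : C} (f : X ⟶ Y),
    ∃ (Z : C) (i : X ⟶ Z) (p : Z ⟶ Y), Cof i ∧ W i ∧ Fib p ∧ i ≫ p = f

namespace ModelStructure

variable {C : Type u} [Category.{v} C] [HasFiniteLimits C] [HasFiniteColimits C]

/-- An object is fibrant if the map to the terminal object is a fibration. -/
def Fibrant (M : ModelStructure C) (X : C) : Prop := M.Fib (terminal.from X)

/-- An object is cofibrant if the map from the initial object is a cofibration. -/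
def Cofibrant (M : ModelStructure C) (X : C) : Prop := M.Cof (initial.to X)

end ModelStructure

/-!
Fibrations are the morphisms with the right lifting property against trivial cofibrations, so it
suffices to lift in a square from `i : K ⟶ L` to `id − shift`. Its top edge is a family `u n` on
`K`, its bottom edge a family `v n` on `L`, and a lift is a family `w n` extending `u n` along `i`
with `w (n + 1) ≫ f n = w n - v n`. Fibrancy of `A 0` gives `w 0`, and each `w (n + 1)` is then a
lift against the fibration `f n`.
-/

section Shift

variable {C : Type u} [Category.{v} C] {K L : C} {i : K ⟶ L}

lemma exists_extension_of_hasLiftingProperty_isTerminal {X T : C} (hT : IsTerminal T) (p : X ⟶ T)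
    [HasLiftingProperty i p] (u : K ⟶ X) : ∃ w : L ⟶ X, i ≫ w = u :=
  have sq : CommSq u i p (hT.from L) := ⟨hT.hom_ext _ _⟩
  ⟨sq.lift, sq.fac_left⟩

variable [Preadditive C] {A : ℕ → C} {f : ∀ n, A (n + 1) ⟶ A n}

lemma exists_extensions_sub_comp_eq [∀ n, HasLiftingProperty i (f n)]
    {u : ∀ n, K ⟶ A n} {v : ∀ n, L ⟶ A n} (huv : ∀ n, u n - u (n + 1) ≫ f n = i ≫ v n)
    (h₀ : ∃ w₀ : L ⟶ A 0, i ≫ w₀ = u 0) :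
    ∃ w : ∀ n, L ⟶ A n, (∀ n, i ≫ w n = u n) ∧ ∀ n, w n - w (n + 1) ≫ f n = v n := by
  obtain ⟨w₀, hw₀⟩ := h₀
  have extend_succ (n : ℕ) (w : {w : L ⟶ A n // i ≫ w = u n}) :
      ∃ w' : {w' : L ⟶ A (n + 1) // i ≫ w' = u (n + 1)}, w'.1 ≫ f n = w.1 - v n := by
    have sq : CommSq (u (n + 1)) i (f n) (w.1 - v n) :=
      ⟨by rw [Preadditive.comp_sub, w.2, ← huv, sub_sub_cancel]⟩
    exact ⟨⟨sq.lift, sq.fac_left⟩, sq.fac_right⟩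
  choose extend hextend using extend_succ
  let w (n : ℕ) : {w : L ⟶ A n // i ≫ w = u n} := Nat.rec ⟨w₀, hw₀⟩ extend n
  have hw (n : ℕ) : (w (n + 1)).1 ≫ f n = (w n).1 - v n := hextend n (w n)
  exact ⟨fun n => (w n).1, fun n => (w n).2, fun n => by rw [hw, sub_sub_cancel]⟩

variable [HasProduct A]

/-- The endomorphism `id − shift` of the product of a tower `f`, whose kernel is the limit of the
tower. It is encoded by its components rather than as a difference of endomorphisms. -/
noncomputable def idSubShift (f : ∀ n, A (n + 1) ⟶ A n) : ∏ᶜ A ⟶ ∏ᶜ A :=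
  Pi.lift fun n => Pi.π A n - Pi.π A (n + 1) ≫ f n

lemma comp_idSubShift_π (g : K ⟶ ∏ᶜ A) (n : ℕ) :
    (g ≫ idSubShift f) ≫ Pi.π A n = g ≫ Pi.π A n - (g ≫ Pi.π A (n + 1)) ≫ f n := by
  simp only [idSubShift, Category.assoc, Pi.lift_π, Preadditive.comp_sub]

lemma hasLiftingProperty_idSubShift [∀ n, HasLiftingProperty i (f n)]
    (hext : ∀ u : K ⟶ A 0, ∃ w : L ⟶ A 0, i ≫ w = u) :
    HasLiftingProperty i (idSubShift f) where
  sq_hasLift {u v} sq := by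
    have huv (n : ℕ) :
        u ≫ Pi.π A n - (u ≫ Pi.π A (n + 1)) ≫ f n = i ≫ v ≫ Pi.π A n := by
      rw [← comp_idSubShift_π, sq.w, Category.assoc]
    obtain ⟨w, hleft, hright⟩ := exists_extensions_sub_comp_eq huv (hext _)
    exact ⟨⟨{
      l := Pi.lift w
      fac_left := Pi.hom_ext _ _ fun n => by rw [Category.assoc, Pi.lift_π, hleft]
      fac_right := Pi.hom_ext _ _ fun n => by
        rw [comp_idSubShift_π, Pi.lift_π, Pi.lift_π, hright] }⟩⟩

theorem stmt_4_general {S : MorphismProperty C} (hf : ∀ n, S.rlp (f n))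
    {T : C} (hT : IsTerminal T) {p : A 0 ⟶ T} (hp : S.rlp p) :
    S.rlp (idSubShift f) := fun _ _ i hi =>
  have (n : ℕ) : HasLiftingProperty i (f n) := hf n i hi
  have : HasLiftingProperty i p := hp i hi
  hasLiftingProperty_idSubShift (exists_extension_of_hasLiftingProperty_isTerminal hT p)

end Shift

namespace ModelStructure

variable {C : Type u} [Category.{v} C] [HasFiniteLimits C] [HasFiniteColimits C]
  (M : ModelStructure C)

instance : M.Fib.IsStableUnderRetracts where
  of_retract {_ _ _ _ f g} h :=
    M.Fib_retract f g ⟨h.i.left, h.r.left, h.i.right, h.r.right,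
      h.retract_left, h.retract_right, h.i_w, h.r_w.symm⟩

instance : (M.Cof ⊓ M.W).HasFactorization M.Fib where
  nonempty_mapFactorizationData f :=
    let ⟨Z, i, p, hCof, hW, hFib, fac⟩ := M.factor_trivCof_fib f
    ⟨{ Z := Z, i := i, p := p, fac := fac, hi := ⟨hCof, hW⟩, hp := hFib }⟩

lemma fib_eq_rlp : M.Fib = (M.Cof ⊓ M.W).rlp :=
  (MorphismProperty.rlp_eq_of_le_rlp_of_hasFactorization_of_isStableUnderRetracts
    fun _ _ p hp _ _ i hi => M.lift_trivCof_fib i p hi.1 hi.2 hp).symm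

end ModelStructure

/-- In a preadditive model category with a zero object and countable
products, given a tower of fibrations `f n : A (n+1) ⟶ A n` with `A 0` fibrant, the morphism
`id − shift : ∏ A ⟶ ∏ A`, whose `n`-th component is `π n − f n ∘ π (n+1)`, is a fibration. -/
theorem stmt_4 {C : Type u} [Category.{v} C] [Preadditive C] [HasZeroObject C]
    [HasCountableProducts C] [HasFiniteLimits C] [HasFiniteColimits C]
    (M : ModelStructure C) (A : ℕ → C) (f : ∀ n : ℕ, A (n + 1) ⟶ A n)
    (hf : ∀ n, M.Fib (f n)) (hA0 : M.Fibrant (A 0)) :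
    M.Fib (Pi.lift (fun n => Pi.π A n - Pi.π A (n + 1) ≫ f n) : ∏ᶜ A ⟶ ∏ᶜ A) := by
  rw [ModelStructure.Fibrant, M.fib_eq_rlp] at hA0
  rw [M.fib_eq_rlp] at hf ⊢
  exact stmt_4_general hf terminalIsTerminal hA0
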